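/- Let K be a finite field with q elements, let v_1,…,v_s ∈ {0,1}^n be the characteristic vectors of the edges of a clutter, and let X be the algebraic toric set parameterized by y^{v_1},…,y^{v_s}. If every homogeneous polynomial of K[t_1,…,t_s] that vanishes at every point of X belongs to the ideal (t_1^{q−1} − t_s^{q−1}, …, t_{s−1}^{q−1} − t_s^{q−1}), then X equals the projective torus T = {[x] : x ∈ (K*)^s} in ℙ^{s−1}. -/

import Mathlib

open MvPolynomial

/-- The projective torus in `ℙ^(s-1)` over `K`: the classes of points all of whose
coordinates are nonzero (a condition invariant under scaling, tested on the chosen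
representative). -/
noncomputable def projTorus (K : Type) [Field K] (s : ℕ) :
    Set (Projectivization K (Fin s → K)) :=
  {p | ∀ i, p.rep i ≠ 0}

/-- The algebraic toric set `X ⊆ ℙ^(s-1)` parameterized by the monomials
`y^{v_1},…,y^{v_s}`: the classes `[(x^{v_1},…,x^{v_s})]` for `x ∈ (K*)^n`. -/
def toricSet (K : Type) [Field K] {n s : ℕ} (hs : 1 ≤ s)
    (v : Fin s → Fin n → ℕ) : Set (Projectivization K (Fin s → K)) :=
  {p | ∃ x : Fin n → K, ∃ hx : ∀ t, x t ≠ 0,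
    p = Projectivization.mk K (fun j => ∏ t, x t ^ v j t)
      (by
        intro h0
        have h1 := congrFun h0 ⟨0, hs⟩
        simp only [Pi.zero_apply] at h1
        exact Finset.prod_ne_zero_iff.mpr (fun t _ => pow_ne_zero _ (hx t)) h1)}

/-!
A product of linear forms, one for each point of a finite set `Z ⊆ ℙ^(s-1)`, separates `Z` from any
given point outside `Z`; hence a point at which every homogeneous polynomial vanishing on `Z`
vanishes is itself in `Z`. The toric set is finite because `K` is, and the binomials
`t_i^{q-1} - t_s^{q-1}` vanish on the torus by Fermat's little theorem, so the membership hypothesis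
puts every torus point into the toric set.
-/

theorem eval_smul_of_isHomogeneous {σ R : Type*} [CommSemiring R] {f : MvPolynomial σ R} {e : ℕ}
    (hf : f.IsHomogeneous e) (c : R) (x : σ → R) : eval (c • x) f = c ^ e * eval x f := by
  rw [eval_eq, eval_eq, Finset.mul_sum]
  refine Finset.sum_congr rfl fun d hd => ?_
  have hdeg : ∑ i ∈ d.support, d i = e := by
    rw [← hf (mem_support_iff.mp hd), Pi.one_def, ← Finsupp.degree_eq_weight_one,
      Finsupp.degree_apply]
  simp only [Pi.smul_apply, smul_eq_mul, mul_pow, Finset.prod_mul_distrib,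
    Finset.prod_pow_eq_pow_sum, hdeg]
  ring

section Separation

variable {σ K : Type*} [Field K]

theorem eval_mk_rep_eq_zero_iff {f : MvPolynomial σ K} {e : ℕ} (hf : f.IsHomogeneous e)
    {x : σ → K} (hx : x ≠ 0) :
    eval (Projectivization.mk K x hx).rep f = 0 ↔ eval x f = 0 := by
  obtain ⟨a, ha⟩ := Projectivization.exists_smul_eq_mk_rep K x hx
  rw [← ha, Units.smul_def, eval_smul_of_isHomogeneous hf,
    mul_eq_zero_iff_left (pow_ne_zero e a.ne_zero)]

theorem exists_linearForm_eval_eq_zero_and_eval_ne_zero {z p : Projectivization K (σ → K)}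
    (hzp : z ≠ p) :
    ∃ f : MvPolynomial σ K, f.IsHomogeneous 1 ∧ eval z.rep f = 0 ∧ eval p.rep f ≠ 0 := by
  obtain ⟨i, hi⟩ := Function.ne_iff.mp z.rep_nonzero
  have hne : (p.rep i / z.rep i) • z.rep ≠ p.rep := fun h => hzp <| by
    rw [← z.mk_rep, ← p.mk_rep, eq_comm, Projectivization.mk_eq_mk_iff']
    exact ⟨_, h⟩
  obtain ⟨j, hj⟩ := Function.ne_iff.mp hne
  refine ⟨C (z.rep j) * X i - C (z.rep i) * X j,
    (isHomogeneous_C_mul_X _ _).sub (isHomogeneous_C_mul_X _ _), ?_, fun hminor => hj ?_⟩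
  · simp only [map_sub, map_mul, eval_C, eval_X]
    ring
  · simp only [map_sub, map_mul, eval_C, eval_X] at hminor
    rw [Pi.smul_apply, smul_eq_mul, div_mul_eq_mul_div, div_eq_iff hi]
    linear_combination hminor

theorem exists_isHomogeneous_eval_eq_zero_and_eval_ne_zero
    {Z : Set (Projectivization K (σ → K))} (hZ : Z.Finite)
    {p : Projectivization K (σ → K)} (hp : p ∉ Z) :
    ∃ (e : ℕ) (f : MvPolynomial σ K), f.IsHomogeneous e ∧
      (∀ z ∈ Z, eval z.rep f = 0) ∧ eval p.rep f ≠ 0 := by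
  induction Z, hZ using Set.Finite.induction_on with
  | empty => exact ⟨0, 1, isHomogeneous_one σ K, by simp, by simp⟩
  | @insert z Z _ _ ih =>
    rw [Set.mem_insert_iff, not_or] at hp
    obtain ⟨e, f, hf, hfZ, hfp⟩ := ih hp.2
    obtain ⟨l, hl, hlz, hlp⟩ := exists_linearForm_eval_eq_zero_and_eval_ne_zero (Ne.symm hp.1)
    refine ⟨1 + e, l * f, hl.mul hf, ?_, ?_⟩
    · rintro y (rfl | hy)
      · rw [map_mul, hlz, zero_mul]
      · rw [map_mul, hfZ y hy, mul_zero]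
    · rw [map_mul]
      exact mul_ne_zero hlp hfp

end Separation

theorem span_X_pow_card_sub_one_sub_le_ker_eval {σ K : Type*} [Field K] [Fintype K] {x : σ → K}
    (hx : ∀ i, x i ≠ 0) :
    Ideal.span {h : MvPolynomial σ K | ∃ i j : σ,
      h = X i ^ (Fintype.card K - 1) - X j ^ (Fintype.card K - 1)} ≤ RingHom.ker (eval x) := by
  rw [Ideal.span_le]
  rintro _ ⟨i, j, rfl⟩
  simp only [SetLike.mem_coe, RingHom.mem_ker, map_sub, map_pow, eval_X,
    FiniteField.pow_card_sub_one_eq_one _ (hx _), sub_self]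

section ToricSet

variable {K : Type} [Field K] {n s : ℕ}

theorem mk_mem_projTorus_iff {x : Fin s → K} (hx : x ≠ 0) :
    Projectivization.mk K x hx ∈ projTorus K s ↔ ∀ i, x i ≠ 0 := by
  obtain ⟨a, ha⟩ := Projectivization.exists_smul_eq_mk_rep K x hx
  simp only [projTorus, Set.mem_ofPred_eq, ← ha, Pi.smul_apply, ne_eq, smul_eq_zero_iff_eq]

theorem toricSet_subset_projTorus (hs : 1 ≤ s) (v : Fin s → Fin n → ℕ) :
    toricSet K hs v ⊆ projTorus K s := by
  rintro _ ⟨x, hx, rfl⟩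
  rw [mk_mem_projTorus_iff]
  exact fun j => Finset.prod_ne_zero_iff.mpr fun t _ => pow_ne_zero _ (hx t)

theorem eval_monomials_eq_zero_of_forall_mem_toricSet {hs : 1 ≤ s} {v : Fin s → Fin n → ℕ}
    {f : MvPolynomial (Fin s) K} {e : ℕ} (hf : f.IsHomogeneous e)
    (hfX : ∀ z ∈ toricSet K hs v, eval z.rep f = 0) {x : Fin n → K} (hx : ∀ t, x t ≠ 0) :
    eval (fun j => ∏ t, x t ^ v j t) f = 0 :=
  (eval_mk_rep_eq_zero_iff hf _).mp (hfX _ ⟨x, hx, rfl⟩)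

end ToricSet

theorem stmt_16_general (K : Type) [Field K] [Fintype K] (q n s : ℕ)
    (hK : Fintype.card K = q) (hs : 1 ≤ s) (v : Fin s → Fin n → ℕ)
    (hvan : ∀ (e : ℕ) (f : MvPolynomial (Fin s) K), f.IsHomogeneous e →
      (∀ x : Fin n → K, (∀ t, x t ≠ 0) →
        eval (fun j : Fin s => ∏ t, x t ^ v j t) f = 0) →
      f ∈ Ideal.span {h : MvPolynomial (Fin s) K |
        ∃ i : Fin s, (i : ℕ) < s - 1 ∧
          h = X i ^ (q - 1) - X (⟨s - 1, Nat.sub_one_lt_of_le hs le_rfl⟩ : Fin s) ^ (q - 1)}) :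
    toricSet K hs v = projTorus K s := by
  subst hK
  refine (toricSet_subset_projTorus hs v).antisymm fun p hp => ?_
  by_contra hpX
  obtain ⟨e, f, hf, hfX, hfp⟩ :=
    exists_isHomogeneous_eval_eq_zero_and_eval_ne_zero (toricSet K hs v).toFinite hpX
  have hmem := hvan e f hf fun x hx => eval_monomials_eq_zero_of_forall_mem_toricSet hf hfX hx
  refine hfp (span_X_pow_card_sub_one_sub_le_ker_eval hp (Ideal.span_mono ?_ hmem))
  rintro _ ⟨i, _, rfl⟩
  exact ⟨i, _, rfl⟩

/-- Let `v_1,…,v_s ∈ {0,1}^n` be the characteristic vectors of the edges of a clutter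
and `X` the algebraic toric set they parameterize. If every homogeneous polynomial
vanishing at every point of `X` lies in the ideal
`(t_1^{q-1} - t_s^{q-1},…,t_{s-1}^{q-1} - t_s^{q-1})`, then `X` equals the projective
torus in `ℙ^(s-1)`. -/
theorem stmt_16 (K : Type) [Field K] [Fintype K] (q n s : ℕ)
    (hK : Fintype.card K = q) (hs : 1 ≤ s)
    (v : Fin s → Fin n → ℕ) (hv01 : ∀ i t, v i t ≤ 1)
    (hinj : Function.Injective v)
    (hclutter : ∀ i j : Fin s, i ≠ j → ¬ ∀ t, v i t ≤ v j t)
    (hvan : ∀ (e : ℕ) (f : MvPolynomial (Fin s) K), f.IsHomogeneous e →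
      (∀ x : Fin n → K, (∀ t, x t ≠ 0) →
        eval (fun j : Fin s => ∏ t, x t ^ v j t) f = 0) →
      f ∈ Ideal.span {h : MvPolynomial (Fin s) K |
        ∃ i : Fin s, (i : ℕ) < s - 1 ∧
          h = X i ^ (q - 1) - X (⟨s - 1, by omega⟩ : Fin s) ^ (q - 1)}) :
    toricSet K hs v = projTorus K s :=
  stmt_16_general K q n s hK hs v hvan
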